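/- Let (X,d) be a metric space, θ ≥ 0, A ⊆ X, and let B be a θ-connected component of ρ_θ(A). Then B ∩ A ≠ ∅. Consequently, if A is finite, the number of θ-connected components of ρ_θ(A) is at most |A|. -/

import Mathlib

def WConvex {X : Type*} [MetricSpace X] (θ : ℝ) (A : Set X) : Prop :=
  ∀ x ∈ A, ∀ y ∈ A, dist x y ≤ θ → ∀ z : X, dist x z + dist z y = dist x y → z ∈ A

def WHull {X : Type*} [MetricSpace X] (θ : ℝ) (A : Set X) : Set X :=
  ⋂₀ {C : Set X | WConvex θ C ∧ A ⊆ C}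

def ThetaConn {X : Type*} [MetricSpace X] (θ : ℝ) (A : Set X) (a b : X) : Prop :=
  ∃ (r : ℕ) (p : ℕ → X), p 0 = a ∧ p r = b ∧ (∀ i ≤ r, p i ∈ A) ∧
    ∀ i < r, dist (p i) (p (i + 1)) ≤ θ

/-- The θ-connected component of `a` in `A`. -/
def ThetaComp {X : Type*} [MetricSpace X] (θ : ℝ) (A : Set X) (a : X) : Set X :=
  {b : X | b ∈ A ∧ ThetaConn θ A a b}

theorem ThetaConn.symmAux {X : Type*} [MetricSpace X] {θ : ℝ} {A : Set X} {a b : X}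
    (h : ThetaConn θ A a b) : ThetaConn θ A b a := by
  obtain ⟨r, p, h0, hr, hm, hd⟩ := h
  refine ⟨r, fun i => p (r - i), by simpa using hr, by simpa using h0,
    fun i _ => hm _ (by omega), fun i hi => ?_⟩
  have h1 := hd (r - (i + 1)) (by omega)
  have h2 : r - (i + 1) + 1 = r - i := by omega
  rw [h2, dist_comm] at h1
  exact h1

theorem ThetaConn.transAux {X : Type*} [MetricSpace X] {θ : ℝ} {A : Set X} {a b c : X}
    (h : ThetaConn θ A a b) (hbc : ThetaConn θ A b c) : ThetaConn θ A a c := by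
  obtain ⟨r, p, h0, hr, hm, hd⟩ := h
  obtain ⟨s, q, k0, ks, km, kd⟩ := hbc
  have key : ∀ i, r ≤ i → (if i ≤ r then p i else q (i - r)) = q (i - r) := by
    intro i hi
    split_ifs with h
    · have : i = r := le_antisymm h hi
      subst this
      simp [hr, k0]
    · rfl
  refine ⟨r + s, fun i => if i ≤ r then p i else q (i - r), by simpa using h0, ?_, ?_, ?_⟩
  · have := key (r + s) (by omega)
    simpa [ks] using this
  · intro i hi
    dsimp only
    split_ifs with h
    · exact hm i h
    · exact km _ (by omega)
  · intro i hi
    dsimp only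
    by_cases h : i < r
    · rw [if_pos h.le, if_pos (by omega)]
      exact hd i h
    · rw [key i (by omega), key (i + 1) (by omega)]
      have := kd (i - r) (by omega)
      have e : i - r + 1 = i + 1 - r := by omega
      rwa [e] at this

theorem ThetaConn.stepAux {X : Type*} [MetricSpace X] {θ : ℝ} {A : Set X} {a b : X}
    (ha : a ∈ A) (hb : b ∈ A) (h : dist a b ≤ θ) : ThetaConn θ A a b := by
  refine ⟨1, fun i => if i = 0 then a else b, by simp, by simp, ?_, ?_⟩
  · intro i _
    dsimp only
    split_ifs <;> assumption
  · intro i hi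
    have : i = 0 := by omega
    subst this
    simpa using h

theorem components_meet_and_card {X : Type*} [MetricSpace X] (θ : ℝ) (hθ : 0 ≤ θ)
    (A : Set X) :
    (∀ a ∈ WHull θ A, (ThetaComp θ (WHull θ A) a ∩ A).Nonempty) ∧
    (A.Finite →
      {S : Set X | ∃ a ∈ WHull θ A, S = ThetaComp θ (WHull θ A) a}.ncard ≤ A.ncard) := by
  have hconv : WConvex θ (WHull θ A) := by
    intro x hx y hy hxy z hz C hC
    exact hC.1 x (hx C hC) y (hy C hC) hxy z hz
  have hsub : A ⊆ WHull θ A := fun x hx C hC => hC.2 hx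
  have main : ∀ a ∈ WHull θ A, (ThetaComp θ (WHull θ A) a ∩ A).Nonempty := by
    intro a ha
    by_contra hne
    have hC : WConvex θ (WHull θ A \ ThetaComp θ (WHull θ A) a) := by
      intro x hx y hy hxy z hz
      have hzH := hconv x hx.1 y hy.1 hxy z hz
      refine ⟨hzH, fun hzc => hx.2 ⟨hx.1, hzc.2.transAux (ThetaConn.stepAux hzH hx.1 ?_)⟩⟩
      have := dist_nonneg (x := z) (y := y)
      rw [dist_comm]
      linarith
    have hm := ha _ ⟨hC, fun x hx => ⟨hsub hx, fun hxc => hne ⟨x, hxc, hx⟩⟩⟩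
    exact hm.2 ⟨ha, ThetaConn.stepAux ha ha (by simpa using hθ)⟩
  refine ⟨main, fun hfin => ?_⟩
  refine le_trans (Set.ncard_le_ncard ?_ (hfin.image (ThetaComp θ (WHull θ A))))
    (Set.ncard_image_le hfin)
  rintro S ⟨a, ha, rfl⟩
  obtain ⟨b, hb, hbA⟩ := main a ha
  refine ⟨b, hbA, ?_⟩
  ext c
  exact ⟨fun h => ⟨h.1, hb.2.transAux h.2⟩, fun h => ⟨h.1, hb.2.symmAux.transAux h.2⟩⟩
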